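/- For every c ∈ [nπ/2, (n+1)π/2), the set ℱ_c = {A ∈ Sym(ℝ^{n+1}) : Θ̃(A) ≥ c} is a convex subset of Sym(ℝ^{n+1}). -/

import Mathlib

open Real Filter Matrix

noncomputable section

/-- The Hessian matrix of a function `v : ℝ^m → ℝ` at `x`. -/
def hessianMatrix {m : ℕ} (v : (Fin m → ℝ) → ℝ) (x : Fin m → ℝ) :
    Matrix (Fin m) (Fin m) ℝ :=
  Matrix.of fun i j => iteratedFDeriv ℝ 2 v x ![Pi.single i 1, Pi.single j 1]

/-- The lifted Lagrangian angle θ̃(A) = ∑ arctan λ_j(A) of a real symmetric matrix. -/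
def liftedAngle {m : ℕ} (A : Matrix (Fin m) (Fin m) ℝ) : ℝ :=
  if h : A.IsHermitian then ∑ j, Real.arctan (h.eigenvalues j) else 0

/-- The Harvey–Lawson branches `F_c` of the special Lagrangian subequation. -/
def Fc (m : ℕ) (c : ℝ) : Set (Matrix (Fin m) (Fin m) ℝ) :=
  {A | A.IsSymm ∧ c ≤ liftedAngle A}

/-- `I_n = diag(0,1,…,1)` as a complex `(n+1)×(n+1)` matrix. -/
def Inmat (n : ℕ) : Matrix (Fin (n+1)) (Fin (n+1)) ℂ :=
  Matrix.diagonal fun i => if i = 0 then 0 else 1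

/-- The complex matrix `I_n + i A`. -/
def cmat {n : ℕ} (A : Matrix (Fin (n+1)) (Fin (n+1)) ℝ) :
    Matrix (Fin (n+1)) (Fin (n+1)) ℂ :=
  Inmat n + Complex.I • A.map (fun a => (a : ℂ))

open Classical in
/-- The lifted space-time Lagrangian angle Θ̃, summing `Complex.arg` (with values in
`(-π, π]`) over the roots (with multiplicity) of the characteristic polynomial of
`I_n + i A`, shifted by `π/2` over the singular set `S = {det (I_n + iA) = 0}` where only
the nonzero roots are counted. -/
def spaceTimeAngle {n : ℕ} (A : Matrix (Fin (n+1)) (Fin (n+1)) ℝ) : ℝ :=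
  if (cmat A).det = 0 then
    π / 2 + ((((cmat A).charpoly.roots).filter (fun z => z ≠ 0)).map Complex.arg).sum
  else (((cmat A).charpoly.roots).map Complex.arg).sum

/-- The degenerate special Lagrangian subequation `ℱ_c ⊂ Sym(ℝ^{n+1})`. -/
def calF (n : ℕ) (c : ℝ) : Set (Matrix (Fin (n+1)) (Fin (n+1)) ℝ) :=
  {A | A.IsSymm ∧ c ≤ spaceTimeAngle A}

/-- Interior of a set of symmetric matrices, relative to the symmetric matrices. -/
def symInterior {m : ℕ} (F : Set (Matrix (Fin m) (Fin m) ℝ)) :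
    Set (Matrix (Fin m) (Fin m) ℝ) :=
  {A | A.IsSymm ∧ ∀ᶠ B in nhds A, B.IsSymm → B ∈ F}

/-- The dual subequation `F̃ = (−Int F)ᶜ` (within the symmetric matrices). -/
def dualSub {m : ℕ} (F : Set (Matrix (Fin m) (Fin m) ℝ)) :
    Set (Matrix (Fin m) (Fin m) ℝ) :=
  {A | A.IsSymm ∧ -A ∉ symInterior F}

/-- An `EReal`-valued (i.e. `[−∞,∞)`-valued) function is subaffine on `U` if, for every
affine function `a` and compact `K ⊆ U`, `u ≤ a` on `∂K` implies `u ≤ a` on `K`. -/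
def IsSubaffine {m : ℕ} (U : Set (Fin m → ℝ)) (u : (Fin m → ℝ) → EReal) : Prop :=
  ∀ (a : (Fin m → ℝ) →ᵃ[ℝ] ℝ) (K : Set (Fin m → ℝ)), IsCompact K → K ⊆ U →
    (∀ x ∈ frontier K, u x ≤ (a x : EReal)) → ∀ x ∈ K, u x ≤ (a x : EReal)

/-- `u` is of type `F` on `U` (i.e. `u ∈ F(U)`): `u` is `[−∞,∞)`-valued, upper
semicontinuous on `U`, and `u + v` is subaffine on `U` for every `C²` function `v`
whose Hessian lies in the dual subequation `F̃` at every point of `U`. -/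
def IsTypeF {m : ℕ} (F : Set (Matrix (Fin m) (Fin m) ℝ)) (U : Set (Fin m → ℝ))
    (u : (Fin m → ℝ) → EReal) : Prop :=
  (∀ x ∈ U, u x ≠ ⊤) ∧ UpperSemicontinuousOn u U ∧
    ∀ v : (Fin m → ℝ) → ℝ, ContDiffOn ℝ 2 v U →
      (∀ x ∈ U, hessianMatrix v x ∈ dualSub F) →
      IsSubaffine U (fun x => u x + ((v x : ℝ) : EReal))

/-- The lower-right `n×n` block `A⁺` of an `(n+1)×(n+1)` matrix. -/
def Aplus {n : ℕ} (A : Matrix (Fin (n+1)) (Fin (n+1)) ℝ) : Matrix (Fin n) (Fin n) ℝ :=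
  Matrix.of fun i j => A i.succ j.succ

end

open Polynomial in
theorem st_roots_enum {ι : Type*} [Fintype ι] [DecidableEq ι] (M : Matrix ι ι ℂ) :
    ∃ r : ι → ℂ, M.charpoly.roots = Finset.univ.val.map r := by
  have hc : M.charpoly.roots.card = Fintype.card ι := by
    rw [← (IsAlgClosed.splits M.charpoly).natDegree_eq_card_roots, Matrix.charpoly_natDegree_eq_dim]
  obtain ⟨l, hl⟩ := Quot.exists_rep M.charpoly.roots
  have hl' : (l : Multiset ℂ) = M.charpoly.roots := hl
  have hlen : l.length = Fintype.card ι := by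
    rw [← hc, ← hl']; rfl
  let e : ι ≃ Fin l.length := Fintype.equivFinOfCardEq hlen.symm
  refine ⟨fun i => l.get (e i), ?_⟩
  have h1 : (Finset.univ : Finset ι).val.map (fun i => l.get (e i))
      = (Finset.univ : Finset (Fin l.length)).val.map (fun i => l.get i) := by
    rw [← Finset.map_univ_equiv e, Finset.map_val, Multiset.map_map]
    rfl
  rw [h1, ← hl']
  simp

theorem st_charpoly_prod {ι : Type*} [Fintype ι] [DecidableEq ι] (M : Matrix ι ι ℂ)
    (r : ι → ℂ) (hr : M.charpoly.roots = Finset.univ.val.map r) (x : ℂ) :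
    (Matrix.scalar ι x - M).det = ∏ i, (x - r i) := by
  rw [← Matrix.eval_charpoly,
    (IsAlgClosed.splits M.charpoly).eval_eq_prod_roots_of_monic M.charpoly_monic, hr,
    Multiset.map_map]
  rfl

theorem st_eigvec {ι : Type*} [Fintype ι] [DecidableEq ι] (M : Matrix ι ι ℂ) (z : ℂ)
    (hz : z ∈ M.charpoly.roots) : ∃ v : ι → ℂ, v ≠ 0 ∧ M *ᵥ v = z • v := by
  have h := (Polynomial.mem_roots'.1 hz).2
  rw [Polynomial.IsRoot, Matrix.eval_charpoly] at h
  obtain ⟨v, hv, h⟩ := Matrix.exists_mulVec_eq_zero_iff.2 h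
  refine ⟨v, hv, ?_⟩
  rw [Matrix.sub_mulVec, sub_eq_zero] at h
  rw [← h]
  ext i
  simp [Matrix.scalar_apply, Matrix.mulVec_diagonal]

theorem st_root_bound {ι : Type*} [Fintype ι] [DecidableEq ι] (M : Matrix ι ι ℂ) (z : ℂ)
    (hz : z ∈ M.charpoly.roots) : ‖z‖ ≤ ∑ i, ∑ j, ‖M i j‖ := by
  obtain ⟨v, hv, h⟩ := st_eigvec M z hz
  obtain ⟨k, hk⟩ : ∃ k, v k ≠ 0 := by
    by_contra hcon
    push Not at hcon
    exact hv (funext hcon)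
  have : Nonempty ι := ⟨k⟩
  obtain ⟨i, hi⟩ := Finite.exists_max (fun i => ‖v i‖)
  have hpos : 0 < ‖v i‖ := lt_of_lt_of_le (norm_pos_iff.2 hk) (hi k)
  have h1 : ‖z‖ * ‖v i‖ ≤ (∑ j, ‖M i j‖) * ‖v i‖ := by
    rw [← norm_mul]
    have := congrFun h i
    simp only [Pi.smul_apply, smul_eq_mul] at this
    rw [← this, Matrix.mulVec, dotProduct, Finset.sum_mul]
    refine (norm_sum_le _ _).trans (Finset.sum_le_sum fun j _ => ?_)
    rw [norm_mul]
    exact mul_le_mul_of_nonneg_left (hi j) (norm_nonneg _)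
  refine (le_of_mul_le_mul_right h1 hpos).trans ?_
  exact Finset.single_le_sum (f := fun i => ∑ j, ‖M i j‖)
    (fun i _ => Finset.sum_nonneg fun j _ => norm_nonneg _) (Finset.mem_univ i)

/-- sum of the arguments of the eigenvalues -/
noncomputable def stPhi {ι : Type*} [Fintype ι] [DecidableEq ι] (M : Matrix ι ι ℂ) : ℝ :=
  (M.charpoly.roots.map Complex.arg).sum

theorem stPhi_eq {ι : Type*} [Fintype ι] [DecidableEq ι] (M : Matrix ι ι ℂ)
    (r : ι → ℂ) (hr : M.charpoly.roots = Finset.univ.val.map r) :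
    stPhi M = ∑ i, Complex.arg (r i) := by
  rw [stPhi, hr, Multiset.map_map]
  rfl

theorem stPhi_tendsto_seq {ι : Type*} [Fintype ι] [DecidableEq ι] (M : ℕ → Matrix ι ι ℂ)
    (M₀ : Matrix ι ι ℂ) (h : Tendsto M atTop (nhds M₀))
    (h0 : ∀ z ∈ M₀.charpoly.roots, z ∈ Complex.slitPlane) :
    ∃ φ : ℕ → ℕ, Tendsto (fun k => stPhi (M (φ k))) atTop (nhds (stPhi M₀)) := by
  choose r hr using fun k => st_roots_enum (M k)
  have hb : ∃ C : ℝ, ∀ k, ∑ i, ∑ j, ‖M k i j‖ ≤ C := by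
    have ht : Tendsto (fun k => ∑ i, ∑ j, ‖M k i j‖) atTop (nhds (∑ i, ∑ j, ‖M₀ i j‖)) := by
      have hcont : Continuous (fun N : Matrix ι ι ℂ => ∑ i, ∑ j, ‖N i j‖) := by fun_prop
      exact (hcont.tendsto M₀).comp h
    obtain ⟨C, hC⟩ := ht.bddAbove_range
    exact ⟨C, fun k => hC ⟨k, rfl⟩⟩
  obtain ⟨C, hC⟩ := hb
  have hmem : ∀ k, r k ∈ Set.pi Set.univ (fun _ : ι => Metric.closedBall (0 : ℂ) C) := by
    intro k i _
    rw [mem_closedBall_zero_iff]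
    refine (st_root_bound (M k) _ ?_).trans (hC k)
    rw [hr k]
    exact Multiset.mem_map_of_mem _ (Finset.mem_univ i)
  obtain ⟨a, _, φ, hφ, ha⟩ := (isCompact_univ_pi fun _ : ι =>
    isCompact_closedBall (0 : ℂ) C).tendsto_subseq hmem
  have hai : ∀ i, Tendsto (fun k => r (φ k) i) atTop (nhds (a i)) := fun i =>
    (tendsto_pi_nhds.1 ha) i
  have hroots : M₀.charpoly.roots = Finset.univ.val.map a := by
    have hp : M₀.charpoly = (((Finset.univ : Finset ι).val.map a).map
        (fun x => Polynomial.X - Polynomial.C x)).prod := by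
      apply Polynomial.funext
      intro x
      have h1 : Tendsto (fun k => (Matrix.scalar ι x - M (φ k)).det) atTop
          (nhds ((Matrix.scalar ι x - M₀).det)) := by
        have hcont : Continuous (fun N : Matrix ι ι ℂ => (Matrix.scalar ι x - N).det) := by
          fun_prop
        exact (hcont.tendsto M₀).comp (h.comp hφ.tendsto_atTop)
      have h2 : Tendsto (fun k => (Matrix.scalar ι x - M (φ k)).det) atTop
          (nhds (∏ i, (x - a i))) := by
        simp_rw [fun k => st_charpoly_prod (M (φ k)) (r (φ k)) (hr (φ k)) x]
        exact tendsto_finsetProd _ fun i _ => tendsto_const_nhds.sub (hai i)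
      rw [Matrix.eval_charpoly, tendsto_nhds_unique h1 h2, Polynomial.eval_multiset_prod,
        Multiset.map_map, Multiset.map_map]
      simp
    rw [hp, Polynomial.roots_multiset_prod_X_sub_C]
  refine ⟨φ, ?_⟩
  rw [stPhi_eq M₀ a hroots]
  simp_rw [fun k => stPhi_eq (M (φ k)) (r (φ k)) (hr (φ k))]
  refine tendsto_finsetSum _ fun i _ => ?_
  refine (Complex.continuousAt_arg (h0 _ ?_)).tendsto.comp (hai i)
  rw [hroots]
  exact Multiset.mem_map_of_mem _ (Finset.mem_univ i)

theorem stPhi_tendsto {ι κ : Type*} [Fintype ι] [DecidableEq ι] {l : Filter κ}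
    [l.IsCountablyGenerated] (M : κ → Matrix ι ι ℂ)
    (M₀ : Matrix ι ι ℂ) (h : Tendsto M l (nhds M₀))
    (h0 : ∀ z ∈ M₀.charpoly.roots, z ∈ Complex.slitPlane) :
    Tendsto (fun k => stPhi (M k)) l (nhds (stPhi M₀)) := by
  refine tendsto_of_subseq_tendsto fun ns hns => ?_
  exact stPhi_tendsto_seq (fun k => M (ns k)) M₀ (h.comp hns) h0

/-- exp(iΦ) is the phase of the determinant -/
theorem stPhi_exp {ι : Type*} [Fintype ι] [DecidableEq ι] (M : Matrix ι ι ℂ) :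
    (‖M.det‖ : ℂ) * Complex.exp (stPhi M * Complex.I) = M.det := by
  obtain ⟨r, hr⟩ := st_roots_enum M
  have hd : M.det = ∏ i, r i := by
    rw [Matrix.det_eq_prod_roots_charpoly, hr]; rfl
  rw [stPhi_eq M r hr, hd]
  push_cast
  rw [Finset.sum_mul, Complex.exp_sum, norm_prod, Complex.ofReal_prod, ← Finset.prod_mul_distrib]
  exact Finset.prod_congr rfl fun i _ => Complex.norm_mul_exp_arg_mul_I _

/-- `diag d + i A` -/
noncomputable def stCm {ι : Type*} [DecidableEq ι] (d : ι → ℝ) (A : Matrix ι ι ℝ) :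
    Matrix ι ι ℂ :=
  Matrix.diagonal (fun i => (d i : ℂ)) + Complex.I • A.map (fun a => (a : ℂ))

theorem st_quad_im {ι : Type*} [Fintype ι] (A : Matrix ι ι ℝ)
    (hA : A.IsSymm) (v : ι → ℂ) :
    (star v ⬝ᵥ (A.map (fun a => (a : ℂ)) *ᵥ v)).im = 0 := by
  have h : star (star v ⬝ᵥ (A.map (fun a => (a : ℂ)) *ᵥ v)) =
      star v ⬝ᵥ (A.map (fun a => (a : ℂ)) *ᵥ v) := by
    have hH : (A.map (fun a => (a : ℂ)))ᴴ = A.map (fun a => (a : ℂ)) := by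
      ext i j
      simp [Matrix.conjTranspose_apply, hA.apply]
    rw [← Matrix.star_dotProduct_star, star_star, Matrix.star_mulVec, hH, dotProduct_comm,
      Matrix.dotProduct_mulVec, dotProduct_comm]
  exact Complex.conj_eq_iff_im.1 h

theorem st_root_re {ι : Type*} [Fintype ι] [DecidableEq ι] (d : ι → ℝ) (A : Matrix ι ι ℝ)
    (hA : A.IsSymm) (z : ℂ) (hz : z ∈ (stCm d A).charpoly.roots) :
    ∃ v : ι → ℂ, v ≠ 0 ∧ stCm d A *ᵥ v = z • v ∧
      z.re * ∑ i, ‖v i‖ ^ 2 = ∑ i, d i * ‖v i‖ ^ 2 := by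
  obtain ⟨v, hv, h⟩ := st_eigvec _ z hz
  refine ⟨v, hv, h, ?_⟩
  have h1 : star v ⬝ᵥ (stCm d A *ᵥ v) = z * ∑ i, ((‖v i‖ ^ 2 : ℝ) : ℂ) := by
    rw [h, dotProduct_smul, smul_eq_mul]
    congr 1
    refine Finset.sum_congr rfl fun i _ => ?_
    rw [Pi.star_apply, RCLike.star_def, Complex.conj_mul']
    norm_cast
  rw [stCm, Matrix.add_mulVec, Matrix.smul_mulVec, dotProduct_add, dotProduct_smul] at h1
  have h2 : star v ⬝ᵥ (Matrix.diagonal (fun i => (d i : ℂ)) *ᵥ v)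
      = ((∑ i, d i * ‖v i‖ ^ 2 : ℝ) : ℂ) := by
    push_cast
    refine Finset.sum_congr rfl fun i _ => ?_
    rw [Matrix.mulVec_diagonal, Pi.star_apply, RCLike.star_def, ← Complex.conj_mul']
    ring
  rw [h2, ← Complex.ofReal_sum] at h1
  have h3 := congrArg Complex.re h1
  simp only [Complex.add_re, Complex.ofReal_re, smul_eq_mul, Complex.I_mul_re,
    st_quad_im A hA v, neg_zero, add_zero, Complex.re_mul_ofReal] at h3
  exact h3.symm

theorem st_norm_pos {ι : Type*} [Fintype ι] (v : ι → ℂ) (hv : v ≠ 0) :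
    0 < ∑ i, ‖v i‖ ^ 2 := by
  obtain ⟨k, hk⟩ := Function.ne_iff.1 hv
  have : 0 < ‖v k‖ := norm_pos_iff.2 hk
  exact Finset.sum_pos' (fun i _ => by positivity) ⟨k, Finset.mem_univ k, by positivity⟩

theorem st_re_nonneg {ι : Type*} [Fintype ι] [DecidableEq ι] (d : ι → ℝ) (hd : ∀ i, 0 ≤ d i)
    (A : Matrix ι ι ℝ) (hA : A.IsSymm) (z : ℂ) (hz : z ∈ (stCm d A).charpoly.roots) :
    0 ≤ z.re := by
  obtain ⟨v, hv, -, h⟩ := st_root_re d A hA z hz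
  have h2 : 0 ≤ ∑ i, d i * ‖v i‖ ^ 2 :=
    Finset.sum_nonneg fun i _ => mul_nonneg (hd i) (by positivity)
  rw [← h] at h2
  exact nonneg_of_mul_nonneg_left h2 (st_norm_pos v hv)

theorem st_re_pos {ι : Type*} [Fintype ι] [DecidableEq ι] (d : ι → ℝ) (hd : ∀ i, 0 < d i)
    (A : Matrix ι ι ℝ) (hA : A.IsSymm) (z : ℂ) (hz : z ∈ (stCm d A).charpoly.roots) :
    0 < z.re := by
  obtain ⟨v, hv, -, h⟩ := st_root_re d A hA z hz
  have h2 : 0 < ∑ i, d i * ‖v i‖ ^ 2 := by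
    obtain ⟨k, hk⟩ := Function.ne_iff.1 hv
    have : 0 < ‖v k‖ := norm_pos_iff.2 hk
    exact Finset.sum_pos' (fun i _ => mul_nonneg (hd i).le (by positivity))
      ⟨k, Finset.mem_univ k, mul_pos (hd k) (by positivity)⟩
  rw [← h] at h2
  exact pos_of_mul_pos_left h2 (st_norm_pos v hv).le

theorem st_slit {ι : Type*} [Fintype ι] [DecidableEq ι] (d : ι → ℝ) (hd : ∀ i, 0 ≤ d i)
    (A : Matrix ι ι ℝ) (hA : A.IsSymm) (hdet : (stCm d A).det ≠ 0) (z : ℂ)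
    (hz : z ∈ (stCm d A).charpoly.roots) : z ∈ Complex.slitPlane := by
  have h1 := st_re_nonneg d hd A hA z hz
  rw [Complex.mem_slitPlane_iff]
  rcases h1.lt_or_eq with h | h
  · exact Or.inl h
  · right
    intro him
    have hz0 : z = 0 := Complex.ext h.symm him
    subst hz0
    apply hdet
    rw [Matrix.det_eq_prod_roots_charpoly]
    exact Multiset.prod_eq_zero hz

theorem stCm_conj {ι : Type*} [Fintype ι] [DecidableEq ι] (d e : ι → ℝ) (A : Matrix ι ι ℝ) :
    Matrix.diagonal (fun i => (e i : ℂ)) * stCm d A * Matrix.diagonal (fun i => (e i : ℂ)) =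
      stCm (fun i => e i ^ 2 * d i) (Matrix.diagonal e * A * Matrix.diagonal e) := by
  ext i j
  simp only [stCm, Matrix.mul_diagonal, Matrix.diagonal_mul, Matrix.add_apply, Matrix.smul_apply,
    Matrix.map_apply, smul_eq_mul, Matrix.diagonal_apply]
  split_ifs with h
  · subst h; push_cast; ring
  · push_cast; ring

theorem st_symm_conj {ι : Type*} [Fintype ι] [DecidableEq ι] (e : ι → ℝ) (A : Matrix ι ι ℝ)
    (hA : A.IsSymm) : (Matrix.diagonal e * A * Matrix.diagonal e).IsSymm := by
  rw [Matrix.IsSymm, Matrix.transpose_mul, Matrix.transpose_mul, Matrix.diagonal_transpose, hA,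
    Matrix.mul_assoc]

theorem st_det_ne {ι : Type*} [Fintype ι] [DecidableEq ι] (d : ι → ℝ) (hd : ∀ i, 0 < d i)
    (A : Matrix ι ι ℝ) (hA : A.IsSymm) : (stCm d A).det ≠ 0 := by
  intro h
  rw [Matrix.det_eq_prod_roots_charpoly, Multiset.prod_eq_zero_iff] at h
  simpa using st_re_pos d hd A hA 0 h

theorem st_const (f : ℝ → ℝ) (hf : ContinuousOn f (Set.Icc 0 1))
    (h : ∀ t ∈ Set.Icc (0:ℝ) 1, ∃ k : ℤ, f t = f 0 + k * (2 * π)) : f 1 = f 0 := by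
  have hT : IsDiscrete (Set.range (fun k : ℤ => (k : ℝ))) :=
    (Int.isClosedEmbedding_coe_real.isEmbedding).isDiscrete_range
  have hpi : (2 * π) ≠ 0 := by positivity
  have := isPreconnected_Icc.constant_of_mapsTo (S := Set.Icc (0:ℝ) 1) hT
    (f := fun t => (f t - f 0) / (2 * π)) ((hf.sub continuousOn_const).div_const _)
    (fun t ht => by
      obtain ⟨k, hk⟩ := h t ht
      refine ⟨k, ?_⟩
      simp only [hk]
      field_simp
      ring) (x := 1) (y := 0) (by simp) (by simp)
  simp only [sub_self, zero_div] at this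
  rw [div_eq_zero_iff] at this
  rcases this with h | h
  · linarith
  · exact absurd h hpi

theorem st_lift {ι : Type*} [Fintype ι] [DecidableEq ι] (d e : ι → ℝ) (hd : ∀ i, 0 < d i)
    (he : ∀ i, 0 < e i) (A : Matrix ι ι ℝ) (hA : A.IsSymm) :
    stPhi (stCm (fun i => e i ^ 2 * d i) (Matrix.diagonal e * A * Matrix.diagonal e)) =
      stPhi (stCm d A) := by
  let E : ℝ → ι → ℝ := fun t i => (1 - t) + t * e i
  have hE : ∀ t ∈ Set.Icc (0:ℝ) 1, ∀ i, 0 < E t i := by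
    intro t ht i
    rcases ht.1.lt_or_eq with h | h
    · have := mul_pos h (he i)
      have h2 := ht.2
      simp only [E]; linarith
    · simp [E, ← h]
  let f : ℝ → ℝ := fun t => stPhi (Matrix.diagonal (fun i => (E t i : ℂ)) * stCm d A *
    Matrix.diagonal (fun i => (E t i : ℂ)))
  have hcont : ContinuousOn f (Set.Icc 0 1) := by
    intro t ht
    refine stPhi_tendsto _ _ ?_ ?_
    · have hc : Continuous (fun t => Matrix.diagonal (fun i => (E t i : ℂ)) * stCm d A *
          Matrix.diagonal (fun i => (E t i : ℂ))) := by
        have h1 : Continuous (fun t => Matrix.diagonal (fun i => (E t i : ℂ))) := by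
          refine Continuous.matrix_diagonal ?_
          simp only [E]
          fun_prop
        exact (h1.mul continuous_const).mul h1
      exact (hc.tendsto t).mono_left nhdsWithin_le_nhds
    · intro z hz
      rw [stCm_conj] at hz
      exact Or.inl (st_re_pos _ (fun i => mul_pos (pow_pos (hE t ht i) 2) (hd i)) _
        (st_symm_conj _ _ hA) z hz)
  have h0 : f 0 = stPhi (stCm d A) := by simp [f, E]
  have h1 : f 1 = stPhi (stCm (fun i => e i ^ 2 * d i)
      (Matrix.diagonal e * A * Matrix.diagonal e)) := by
    rw [← stCm_conj]; simp [f, E]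
  rw [← h0, ← h1]
  refine st_const f hcont fun t ht => ?_
  have hdet := st_det_ne d hd A hA
  have hr : (Matrix.diagonal (fun i => (E t i : ℂ)) * stCm d A *
      Matrix.diagonal (fun i => (E t i : ℂ))).det
      = (((∏ i, E t i) ^ 2 : ℝ) : ℂ) * (stCm d A).det := by
    rw [Matrix.det_mul, Matrix.det_mul, Matrix.det_diagonal]
    push_cast
    ring
  have hp : 0 < (∏ i, E t i) ^ 2 := pow_pos (Finset.prod_pos fun i _ => hE t ht i) 2
  have e1 := stPhi_exp (Matrix.diagonal (fun i => (E t i : ℂ)) * stCm d A *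
      Matrix.diagonal (fun i => (E t i : ℂ)))
  have e0 := stPhi_exp (stCm d A)
  change _ * Complex.exp ((f t : ℂ) * _) = _ at e1
  rw [← h0] at e0
  rw [hr, norm_mul, Complex.norm_real, Real.norm_of_nonneg hp.le, Complex.ofReal_mul, mul_assoc]
    at e1
  have e2 := mul_left_cancel₀ (by exact_mod_cast hp.ne') e1
  have hn : ((‖(stCm d A).det‖ : ℝ) : ℂ) ≠ 0 := by
    exact_mod_cast (norm_ne_zero_iff.2 hdet)
  have e3 : ((‖(stCm d A).det‖ : ℝ) : ℂ) * Complex.exp ((f t : ℂ) * Complex.I) =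
      ((‖(stCm d A).det‖ : ℝ) : ℂ) * Complex.exp ((f 0 : ℂ) * Complex.I) := by
    rw [e2, e0]
  have e4 := mul_left_cancel₀ hn e3
  obtain ⟨k, hk⟩ := Complex.exp_eq_exp_iff_exists_int.1 e4
  refine ⟨k, ?_⟩
  have := congrArg Complex.im hk
  simpa using this

theorem st_spectral {ι : Type*} [Fintype ι] [DecidableEq ι] (T : Matrix ι ι ℝ) (hT : T.IsSymm) :
    ∃ (U : Matrix ι ι ℝ) (l : ι → ℝ), U * Uᵀ = 1 ∧ Uᵀ * U = 1 ∧
      T = U * Matrix.diagonal l * Uᵀ := by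
  have hH : T.IsHermitian := by
    rw [Matrix.IsHermitian, Matrix.conjTranspose_eq_transpose_of_trivial]; exact hT
  refine ⟨hH.eigenvectorUnitary, hH.eigenvalues, ?_, ?_, ?_⟩
  · have := Unitary.coe_mul_star_self hH.eigenvectorUnitary
    rwa [Unitary.coe_star, Matrix.star_eq_conjTranspose, Matrix.conjTranspose_eq_transpose_of_trivial] at this
  · have := Unitary.coe_star_mul_self hH.eigenvectorUnitary
    rwa [Matrix.star_eq_conjTranspose, Matrix.conjTranspose_eq_transpose_of_trivial] at this
  · have := hH.spectral_theorem
    rw [Unitary.conjStarAlgAut_apply, Matrix.star_eq_conjTranspose,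
      Matrix.conjTranspose_eq_transpose_of_trivial] at this
    exact this

theorem st_arg (x : ℝ) : Complex.arg (1 + Complex.I * x) = Real.arctan x := by
  rw [Complex.arg_of_re_nonneg (by simp), Real.arctan_eq_arcsin]
  congr 2
  · simp
  · rw [Complex.norm_def, Complex.normSq_apply]
    simp
    ring_nf

theorem stPhi_one {ι : Type*} [Fintype ι] [DecidableEq ι] (U : Matrix ι ι ℝ) (l : ι → ℝ)
    (h1 : U * Uᵀ = 1) (h2 : Uᵀ * U = 1) :
    stPhi (stCm (fun _ => 1) (U * Matrix.diagonal l * Uᵀ)) = ∑ i, Real.arctan (l i) := by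
  let f : ℝ →+* ℂ := Complex.ofRealHom
  have c1 : U.map f * Uᵀ.map f = 1 := by
    rw [← Matrix.map_mul, h1]; simp
  have c2 : Uᵀ.map f * U.map f = 1 := by
    rw [← Matrix.map_mul, h2]; simp
  let V : (Matrix ι ι ℂ)ˣ := ⟨U.map f, Uᵀ.map f, c1, c2⟩
  have hM : stCm (fun _ => 1) (U * Matrix.diagonal l * Uᵀ) =
      (V : Matrix ι ι ℂ) * Matrix.diagonal (fun i => 1 + Complex.I * (l i : ℂ)) *
        ((V⁻¹ : (Matrix ι ι ℂ)ˣ) : Matrix ι ι ℂ) := by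
    have hd : Matrix.diagonal (fun i => 1 + Complex.I * (l i : ℂ)) =
        1 + Complex.I • (Matrix.diagonal l).map f := by
      ext i j
      by_cases h : i = j <;> simp [h, f]
    change _ = U.map f * _ * Uᵀ.map f
    rw [hd, Matrix.mul_add, Matrix.add_mul, Matrix.mul_one, c1, Matrix.mul_smul, Matrix.smul_mul,
      ← Matrix.map_mul, ← Matrix.map_mul]
    simp only [stCm, Complex.ofReal_one, Matrix.diagonal_one]
    rfl
  have hr : (stCm (fun _ => 1) (U * Matrix.diagonal l * Uᵀ)).charpoly.roots =
      Finset.univ.val.map (fun i => 1 + Complex.I * (l i : ℂ)) := by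
    rw [hM]
    have := Matrix.charpoly_units_conj V (Matrix.diagonal (fun i => 1 + Complex.I * (l i : ℂ)))
    rw [Matrix.coe_units_inv, this, Matrix.charpoly_diagonal]
    rw [Polynomial.roots_prod]
    · simp only [Polynomial.roots_X_sub_C, Multiset.bind_singleton]
    · exact Finset.prod_ne_zero_iff.2 fun i _ => Polynomial.X_sub_C_ne_zero _
  rw [stPhi_eq _ _ hr]
  exact Finset.sum_congr rfl fun i _ => st_arg _

theorem st_arctan_concave : ConcaveOn ℝ (Set.Ici 0) Real.arctan := by
  refine AntitoneOn.concaveOn_of_deriv (convex_Ici 0) Real.continuous_arctan.continuousOn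
    Real.differentiable_arctan.differentiableOn ?_
  rw [interior_Ici]
  intro x hx y hy hxy
  simp only [Real.deriv_arctan]
  have hx' : (0:ℝ) < x := hx
  gcongr

theorem st_peierls {ι : Type*} [Fintype ι] [DecidableEq ι] (W : Matrix ι ι ℝ) (l : ι → ℝ)
    (h1 : W * Wᵀ = 1) (h2 : Wᵀ * W = 1) (hl : ∀ i, 0 ≤ l i) :
    ∑ i, Real.arctan (l i) ≤ ∑ i, Real.arctan ((W * Matrix.diagonal l * Wᵀ) i i) := by
  have e : ∀ i, (W * Matrix.diagonal l * Wᵀ) i i = ∑ j, (W i j) ^ 2 • l j := by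
    intro i
    rw [Matrix.mul_apply]
    refine Finset.sum_congr rfl fun j _ => ?_
    rw [Matrix.mul_diagonal, Matrix.transpose_apply, smul_eq_mul]
    ring
  have r1 : ∀ i, ∑ j, (W i j) ^ 2 = 1 := by
    intro i
    have := congrFun (congrFun h1 i) i
    rw [Matrix.mul_apply, Matrix.one_apply_eq] at this
    rw [← this]
    exact Finset.sum_congr rfl fun j _ => by rw [Matrix.transpose_apply, sq]
  have r2 : ∀ j, ∑ i, (W i j) ^ 2 = 1 := by
    intro j
    have := congrFun (congrFun h2 j) j
    rw [Matrix.mul_apply, Matrix.one_apply_eq] at this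
    rw [← this]
    exact Finset.sum_congr rfl fun j _ => by rw [Matrix.transpose_apply, sq]
  calc ∑ j, Real.arctan (l j) = ∑ j, (∑ i, (W i j) ^ 2) * Real.arctan (l j) := by
        simp [r2]
    _ = ∑ i, ∑ j, (W i j) ^ 2 • Real.arctan (l j) := by
        simp_rw [Finset.sum_mul]
        rw [Finset.sum_comm]
        rfl
    _ ≤ _ := by
        refine Finset.sum_le_sum fun i _ => ?_
        rw [e i]
        exact st_arctan_concave.le_map_sum (fun j _ => sq_nonneg _) (r1 i) (fun j _ => hl j)

/-- positivity of the quadratic form -/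
def stPsd {ι : Type*} [Fintype ι] (A : Matrix ι ι ℝ) : Prop := ∀ x : ι → ℝ, 0 ≤ x ⬝ᵥ (A *ᵥ x)

theorem st_diag_entry {ι : Type*} [Fintype ι] [DecidableEq ι] (V T : Matrix ι ι ℝ) (i : ι) :
    (Vᵀ * T * V) i i = (fun k => V k i) ⬝ᵥ (T *ᵥ (fun k => V k i)) := by
  rw [Matrix.mul_assoc, Matrix.mul_apply]
  rfl

theorem stPsd_diag {ι : Type*} [Fintype ι] [DecidableEq ι] (V T : Matrix ι ι ℝ) (hT : stPsd T)
    (i : ι) : 0 ≤ (Vᵀ * T * V) i i := by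
  rw [st_diag_entry]; exact hT _

theorem st_conj_back {ι : Type*} [Fintype ι] [DecidableEq ι] (U : Matrix ι ι ℝ) (l : ι → ℝ)
    (h2 : Uᵀ * U = 1) : Uᵀ * (U * Matrix.diagonal l * Uᵀ) * U = Matrix.diagonal l := by
  calc Uᵀ * (U * Matrix.diagonal l * Uᵀ) * U = (Uᵀ * U) * Matrix.diagonal l * (Uᵀ * U) := by
        simp only [Matrix.mul_assoc]
    _ = _ := by rw [h2, Matrix.one_mul, Matrix.mul_one]

theorem st_peierls' {ι : Type*} [Fintype ι] [DecidableEq ι] (V T : Matrix ι ι ℝ)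
    (h1 : V * Vᵀ = 1) (h2 : Vᵀ * V = 1) (hT : T.IsSymm) (hp : stPsd T) :
    stPhi (stCm (fun _ => 1) T) ≤ ∑ i, Real.arctan ((Vᵀ * T * V) i i) := by
  obtain ⟨U, l, u1, u2, rfl⟩ := st_spectral T hT
  rw [stPhi_one U l u1 u2]
  have hl : ∀ i, 0 ≤ l i := by
    intro i
    have := stPsd_diag U _ hp i
    rwa [st_conj_back U l u2, Matrix.diagonal_apply_eq] at this
  have := st_peierls (Vᵀ * U) l ?_ ?_ hl
  · rw [Matrix.transpose_mul, Matrix.transpose_transpose] at this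
    simpa only [Matrix.mul_assoc] using this
  · rw [Matrix.transpose_mul, Matrix.transpose_transpose]
    calc Vᵀ * U * (Uᵀ * V) = Vᵀ * (U * Uᵀ) * V := by simp only [Matrix.mul_assoc]
      _ = 1 := by rw [u1, Matrix.mul_one, h2]
  · rw [Matrix.transpose_mul, Matrix.transpose_transpose]
    calc Uᵀ * V * (Vᵀ * U) = Uᵀ * (V * Vᵀ) * U := by simp only [Matrix.mul_assoc]
      _ = 1 := by rw [h1, Matrix.mul_one, u2]

theorem st_concave_one {ι : Type*} [Fintype ι] [DecidableEq ι] (X Y : Matrix ι ι ℝ)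
    (hX : X.IsSymm) (hY : Y.IsSymm) (pX : stPsd X) (pY : stPsd Y) (a b : ℝ) (ha : 0 ≤ a)
    (hb : 0 ≤ b) (hab : a + b = 1) :
    a * stPhi (stCm (fun _ => 1) X) + b * stPhi (stCm (fun _ => 1) Y) ≤
      stPhi (stCm (fun _ => 1) (a • X + b • Y)) := by
  have hZ : (a • X + b • Y).IsSymm := (hX.smul a).add (hY.smul b)
  obtain ⟨V, l, v1, v2, hV⟩ := st_spectral _ hZ
  have hz : stPhi (stCm (fun _ => 1) (a • X + b • Y)) = ∑ i, Real.arctan (l i) := by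
    rw [hV, stPhi_one V l v1 v2]
  have hl : ∀ i, l i = a * (Vᵀ * X * V) i i + b * (Vᵀ * Y * V) i i := by
    intro i
    have h := st_conj_back V l v2
    rw [← hV] at h
    have h' := congrFun (congrFun h i) i
    rw [Matrix.diagonal_apply_eq] at h'
    rw [← h', Matrix.mul_add, Matrix.add_mul]
    simp
  rw [hz]
  calc _ ≤ a * ∑ i, Real.arctan ((Vᵀ * X * V) i i) + b * ∑ i, Real.arctan ((Vᵀ * Y * V) i i) :=
        add_le_add (mul_le_mul_of_nonneg_left (st_peierls' V X v1 v2 hX pX) ha)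
          (mul_le_mul_of_nonneg_left (st_peierls' V Y v1 v2 hY pY) hb)
    _ = ∑ i, (a • Real.arctan ((Vᵀ * X * V) i i) + b • Real.arctan ((Vᵀ * Y * V) i i)) := by
        rw [Finset.mul_sum, Finset.mul_sum, ← Finset.sum_add_distrib]; rfl
    _ ≤ _ := by
        refine Finset.sum_le_sum fun i _ => ?_
        rw [hl i]
        exact st_arctan_concave.2 (stPsd_diag V X pX i) (stPsd_diag V Y pY i) ha hb hab

theorem st_norm_form {ι : Type*} [Fintype ι] [DecidableEq ι] (d : ι → ℝ) (hd : ∀ i, 0 < d i)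
    (A : Matrix ι ι ℝ) (hA : A.IsSymm) :
    stPhi (stCm d A) = stPhi (stCm (fun _ => 1) (Matrix.diagonal (fun i => (√(d i))⁻¹) * A *
      Matrix.diagonal (fun i => (√(d i))⁻¹))) := by
  rw [← st_lift d (fun i => (√(d i))⁻¹) hd (fun i => inv_pos.2 (Real.sqrt_pos.2 (hd i))) A hA]
  congr 2
  ext i
  rw [inv_pow, Real.sq_sqrt (hd i).le, inv_mul_cancel₀ (hd i).ne']

theorem st_quad_conj {ι : Type*} [Fintype ι] [DecidableEq ι] (e : ι → ℝ) (A : Matrix ι ι ℝ)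
    (x : ι → ℝ) : x ⬝ᵥ ((Matrix.diagonal e * A * Matrix.diagonal e) *ᵥ x) =
      (Matrix.diagonal e *ᵥ x) ⬝ᵥ (A *ᵥ (Matrix.diagonal e *ᵥ x)) := by
  rw [← Matrix.mulVec_mulVec, ← Matrix.mulVec_mulVec, Matrix.dotProduct_mulVec]
  congr 1
  rw [← Matrix.mulVec_transpose, Matrix.diagonal_transpose]

theorem st_concave_pos {ι : Type*} [Fintype ι] [DecidableEq ι] (d : ι → ℝ) (hd : ∀ i, 0 < d i)
    (X Y : Matrix ι ι ℝ)
    (hX : X.IsSymm) (hY : Y.IsSymm) (pX : stPsd X) (pY : stPsd Y) (a b : ℝ) (ha : 0 ≤ a)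
    (hb : 0 ≤ b) (hab : a + b = 1) :
    a * stPhi (stCm d X) + b * stPhi (stCm d Y) ≤ stPhi (stCm d (a • X + b • Y)) := by
  rw [st_norm_form d hd X hX, st_norm_form d hd Y hY,
    st_norm_form d hd _ ((hX.smul a).add (hY.smul b))]
  have := st_concave_one _ _ (st_symm_conj (fun i => (√(d i))⁻¹) X hX)
    (st_symm_conj (fun i => (√(d i))⁻¹) Y hY)
    (fun x => by rw [st_quad_conj]; exact pX _) (fun x => by rw [st_quad_conj]; exact pY _)
    a b ha hb hab
  convert this using 4
  simp [Matrix.mul_add, Matrix.add_mul]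

theorem st_lower {ι : Type*} [Fintype ι] [DecidableEq ι] (d : ι → ℝ) (hd : ∀ i, 0 < d i)
    (A : Matrix ι ι ℝ) (hA : A.IsSymm) (m : ℝ) (hm : -(π / 2) < m) (hm0 : m ≤ 0)
    (h : ((Fintype.card ι : ℝ) - 1) * (π / 2) + m ≤ stPhi (stCm d A)) (x : ι → ℝ) :
    Real.tan m * ∑ i, d i * x i ^ 2 ≤ x ⬝ᵥ (A *ᵥ x) := by
  rw [st_norm_form d hd A hA] at h
  obtain ⟨U, l, u1, u2, hU⟩ := st_spectral _ (st_symm_conj (fun i => (√(d i))⁻¹) A hA)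
  have hlow : ∀ j, Real.tan m ≤ l j := by
    intro j
    rw [hU, stPhi_one U l u1 u2, ← Finset.add_sum_erase _ _ (Finset.mem_univ j)] at h
    have h3 : ∑ i ∈ Finset.univ.erase j, Real.arctan (l i) ≤
        ((Fintype.card ι : ℝ) - 1) * (π / 2) := by
      have := Finset.sum_le_card_nsmul (Finset.univ.erase j) (fun i => Real.arctan (l i)) (π / 2)
        (fun i _ => (Real.arctan_lt_pi_div_two _).le)
      rw [Finset.card_erase_of_mem (Finset.mem_univ j), Finset.card_univ, nsmul_eq_mul,
        Nat.cast_sub (Fintype.card_pos_iff.2 ⟨j⟩)] at this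
      simpa using this
    have h4 : m ≤ Real.arctan (l j) := by linarith
    rw [← Real.arctan_le_arctan_iff, Real.arctan_tan hm (by linarith [Real.pi_pos])]
    exact h4
  let y : ι → ℝ := fun i => √(d i) * x i
  have hy : Matrix.diagonal (fun i => (√(d i))⁻¹) *ᵥ y = x := by
    ext i
    rw [Matrix.mulVec_diagonal]
    simp only [y]
    rw [← mul_assoc, inv_mul_cancel₀ (Real.sqrt_pos.2 (hd i)).ne', one_mul]
  have hq : x ⬝ᵥ (A *ᵥ x) = ∑ j, l j * ((Uᵀ *ᵥ y) j) ^ 2 := by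
    conv_lhs => rw [← hy]
    rw [← st_quad_conj, hU, ← Matrix.mulVec_mulVec, ← Matrix.mulVec_mulVec,
      Matrix.dotProduct_mulVec, ← Matrix.mulVec_transpose]
    refine Finset.sum_congr rfl fun j _ => ?_
    rw [Matrix.mulVec_diagonal]
    ring
  have hn : ∑ i, d i * x i ^ 2 = ∑ j, ((Uᵀ *ᵥ y) j) ^ 2 := by
    have h5 : (Uᵀ *ᵥ y) ⬝ᵥ (Uᵀ *ᵥ y) = y ⬝ᵥ y := by
      rw [Matrix.dotProduct_mulVec, ← Matrix.mulVec_transpose, Matrix.transpose_transpose,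
        Matrix.mulVec_mulVec, u1, Matrix.one_mulVec]
    have h6 : y ⬝ᵥ y = ∑ i, d i * x i ^ 2 := by
      refine Finset.sum_congr rfl fun i _ => ?_
      simp only [y]
      rw [mul_mul_mul_comm, Real.mul_self_sqrt (hd i).le]
      ring
    rw [← h6, ← h5]
    refine Finset.sum_congr rfl fun i _ => ?_
    ring
  rw [hq, hn, Finset.mul_sum]
  exact Finset.sum_le_sum fun j _ => mul_le_mul_of_nonneg_right (hlow j) (sq_nonneg _)

/-- diagonal of `I_n` -/
noncomputable def stD0 (n : ℕ) : Fin (n+1) → ℝ := fun i => if i = 0 then 0 else 1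

theorem st_cmat {n : ℕ} (A : Matrix (Fin (n+1)) (Fin (n+1)) ℝ) : cmat A = stCm (stD0 n) A := by
  rw [cmat, stCm, Inmat]
  congr 2
  ext i
  simp only [stD0]
  split_ifs <;> simp

theorem st_filter_sum (s : Multiset ℂ) (p : ℂ → Prop) [DecidablePred p]
    (hp : ∀ z, p z ↔ z ≠ 0) :
    ((s.filter p).map Complex.arg).sum = (s.map Complex.arg).sum := by
  induction s using Multiset.induction_on with
  | empty => simp
  | cons a s ih =>
    by_cases h : p a
    · rw [Multiset.filter_cons_of_pos _ h]; simp [ih]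
    · rw [Multiset.filter_cons_of_neg _ h]
      have : a = 0 := by
        by_contra h'
        exact h ((hp a).2 h')
      simp [ih, this]

theorem st_angle_zero {n : ℕ} (A : Matrix (Fin (n+1)) (Fin (n+1)) ℝ)
    (h : (stCm (stD0 n) A).det = 0) : spaceTimeAngle A = π / 2 + stPhi (stCm (stD0 n) A) := by
  rw [spaceTimeAngle, st_cmat, if_pos h, stPhi]
  congr 1
  exact st_filter_sum _ _ fun z => Iff.rfl

theorem st_angle_ne {n : ℕ} (A : Matrix (Fin (n+1)) (Fin (n+1)) ℝ)
    (h : (stCm (stD0 n) A).det ≠ 0) : spaceTimeAngle A = stPhi (stCm (stD0 n) A) := by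
  rw [spaceTimeAngle, st_cmat, if_neg h, stPhi]

theorem st_D0_nonneg {n : ℕ} (i : Fin (n+1)) : 0 ≤ stD0 n i := by
  simp only [stD0]; split_ifs <;> simp

theorem st_sing {n : ℕ} (A : Matrix (Fin (n+1)) (Fin (n+1)) ℝ) (hA : A.IsSymm)
    (h : (stCm (stD0 n) A).det = 0) (i : Fin (n+1)) : A i 0 = 0 := by
  rw [Matrix.det_eq_prod_roots_charpoly, Multiset.prod_eq_zero_iff] at h
  obtain ⟨v, hv, hM, hre⟩ := st_root_re _ A hA 0 h
  simp only [Complex.zero_re, zero_mul] at hre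
  have h0 := (Finset.sum_eq_zero_iff_of_nonneg (fun i _ => mul_nonneg (st_D0_nonneg i)
    (by positivity))).1 hre.symm
  have hvi : ∀ i : Fin (n+1), i ≠ 0 → v i = 0 := by
    intro i hi
    have := h0 i (Finset.mem_univ i)
    simpa [stD0, hi] using this
  have hv0 : v 0 ≠ 0 := by
    intro hz
    apply hv
    ext j
    by_cases hj : j = 0
    · rw [hj, hz]; rfl
    · rw [hvi j hj]; rfl
  have h1 := congrFun hM i
  rw [zero_smul, Matrix.mulVec, dotProduct, Finset.sum_eq_single 0
    (fun j _ hj => by rw [hvi j hj, mul_zero]) (by simp)] at h1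
  have h2 : stCm (stD0 n) A i 0 = 0 := by
    rcases mul_eq_zero.1 h1 with h | h
    · exact h
    · exact absurd h hv0
  by_cases hi : i = 0
  · subst hi
    simpa [stCm, stD0] using h2
  · simpa [stCm, Matrix.diagonal_apply_ne _ hi] using h2

theorem st_block {n : ℕ} (M : Matrix (Fin (n+1)) (Fin (n+1)) ℂ) (h : ∀ j : Fin n, M 0 j.succ = 0) :
    stPhi M = Complex.arg (M 0 0) + stPhi (M.submatrix Fin.succ Fin.succ) := by
  have hc : M.charpoly = (Polynomial.X - Polynomial.C (M 0 0)) *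
      (M.submatrix Fin.succ Fin.succ).charpoly := by
    rw [Matrix.charpoly, Matrix.det_succ_row_zero, Fin.sum_univ_succ]
    have hz : ∑ i : Fin n, (-1) ^ (i.succ : ℕ) * M.charmatrix 0 i.succ *
        (M.charmatrix.submatrix Fin.succ i.succ.succAbove).det = 0 := by
      refine Finset.sum_eq_zero fun i _ => ?_
      rw [Matrix.charmatrix_apply_ne _ _ _ (Fin.succ_ne_zero i).symm, h i]
      simp
    rw [hz, add_zero, Matrix.charmatrix_apply_eq, Matrix.charpoly]
    have hs : M.charmatrix.submatrix Fin.succ (Fin.succAbove 0) =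
        (M.submatrix Fin.succ Fin.succ).charmatrix := by
      ext i j : 2
      by_cases hij : i = j
      · subst hij; simp [Matrix.charmatrix_apply_eq]
      · rw [Matrix.charmatrix_apply_ne _ _ _ hij]
        simp [Matrix.charmatrix_apply_ne _ _ _ (fun h' => hij (Fin.succ_injective _ h'))]
    rw [hs]
    simp
  rw [stPhi, hc, Polynomial.roots_mul (mul_ne_zero (Polynomial.X_sub_C_ne_zero _)
    (Matrix.charpoly_monic _).ne_zero), Polynomial.roots_X_sub_C]
  simp [stPhi]

theorem st_E_symm {n : ℕ} (A : Matrix (Fin (n+1)) (Fin (n+1)) ℝ) (hA : A.IsSymm) (δ : ℝ) :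
    (A + Matrix.single 0 0 δ).IsSymm := by
  refine hA.add ?_
  rw [Matrix.IsSymm, Matrix.transpose_single]

/-- on the singular set, adding a positive corner entry realises the shifted angle -/
theorem st_sing_shift {n : ℕ} (A : Matrix (Fin (n+1)) (Fin (n+1)) ℝ) (hA : A.IsSymm)
    (h : (stCm (stD0 n) A).det = 0) (δ : ℝ) (hδ : 0 < δ) :
    stPhi (stCm (stD0 n) (A + Matrix.single 0 0 δ)) = spaceTimeAngle A := by
  have h0 := st_sing A hA h
  have h0' : ∀ j, A 0 j = 0 := fun j => by rw [← h0 j, hA.apply]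
  rw [st_angle_zero A h, st_block (stCm (stD0 n) A), st_block]
  · have e1 : (stCm (stD0 n) A) 0 0 = 0 := by simp [stCm, stD0, h0]
    have e2 : (stCm (stD0 n) (A + Matrix.single 0 0 δ)) 0 0 = (δ : ℂ) * Complex.I := by
      simp [stCm, stD0, h0, mul_comm]
    have e3 : (stCm (stD0 n) (A + Matrix.single 0 0 δ)).submatrix Fin.succ Fin.succ =
        (stCm (stD0 n) A).submatrix Fin.succ Fin.succ := by
      ext i j
      have : Matrix.single (0 : Fin (n+1)) (0 : Fin (n+1)) δ i.succ j.succ = 0 := by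
        rw [Matrix.single_apply_of_ne]
        simp [(Fin.succ_ne_zero i).symm]
      simp [stCm, this]
    rw [e1, e2, e3, Complex.arg_real_mul _ hδ, Complex.arg_I, Complex.arg_zero, zero_add]
  · intro j
    have : Matrix.single (0 : Fin (n+1)) (0 : Fin (n+1)) δ 0 j.succ = 0 := by
      rw [Matrix.single_apply_of_ne]
      simp [(Fin.succ_ne_zero j).symm]
    simp [stCm, this, h0', Matrix.diagonal_apply_ne _ (Fin.succ_ne_zero j).symm]
  · intro j
    simp [stCm, h0', Matrix.diagonal_apply_ne _ (Fin.succ_ne_zero j).symm]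

theorem st_lim_delta {n : ℕ} (A : Matrix (Fin (n+1)) (Fin (n+1)) ℝ) (hA : A.IsSymm) :
    Tendsto (fun δ : ℝ => stPhi (stCm (stD0 n) (A + Matrix.single 0 0 δ)))
      (nhdsWithin 0 (Set.Ioi 0)) (nhds (spaceTimeAngle A)) := by
  by_cases h : (stCm (stD0 n) A).det = 0
  · refine tendsto_const_nhds.congr' ?_
    filter_upwards [self_mem_nhdsWithin] with δ hδ
    exact (st_sing_shift A hA h δ hδ).symm
  · rw [st_angle_ne A h]
    refine stPhi_tendsto _ _ ?_ (st_slit _ st_D0_nonneg A hA h)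
    have hc : Continuous (fun δ : ℝ => stCm (stD0 n) (A + Matrix.single 0 0 δ)) := by
      unfold stCm
      have hA' : Continuous (fun δ : ℝ => A + Matrix.single 0 0 δ) := ?_
      · exact continuous_const.add
          ((Continuous.matrix_map hA' Complex.continuous_ofReal).fun_const_smul Complex.I)
      refine continuous_const.add ?_
      refine continuous_matrix fun i j => ?_
      simp only [Matrix.single_apply]
      split_ifs
      · exact continuous_id
      · exact continuous_const
    have := (hc.tendsto 0).mono_left (nhdsWithin_le_nhds (s := Set.Ioi 0))
    simpa using this

theorem st_lim_s {n : ℕ} (A : Matrix (Fin (n+1)) (Fin (n+1)) ℝ) (hA : A.IsSymm)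
    (h : (stCm (stD0 n) A).det ≠ 0) :
    Tendsto (fun s : ℝ => stPhi (stCm (fun i => stD0 n i + s) A))
      (nhdsWithin 0 (Set.Ioi 0)) (nhds (stPhi (stCm (stD0 n) A))) := by
  refine stPhi_tendsto _ _ ?_ (st_slit _ st_D0_nonneg A hA h)
  have hc : Continuous (fun s : ℝ => stCm (fun i => stD0 n i + s) A) := by
    unfold stCm
    refine Continuous.add (Continuous.matrix_diagonal ?_) continuous_const
    fun_prop
  have := (hc.tendsto 0).mono_left (nhdsWithin_le_nhds (s := Set.Ioi 0))
  simpa using this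

theorem st_psd_ne {n : ℕ} (A : Matrix (Fin (n+1)) (Fin (n+1)) ℝ) (hA : A.IsSymm)
    (h : (stCm (stD0 n) A).det ≠ 0) (hΘ : (n : ℝ) * π / 2 ≤ stPhi (stCm (stD0 n) A)) :
    stPsd A := by
  intro x
  have hl := st_lim_s A hA h
  let m : ℝ → ℝ := fun s => min (stPhi (stCm (fun i => stD0 n i + s) A) - n * π / 2) 0
  have hm : Tendsto m (nhdsWithin 0 (Set.Ioi 0)) (nhds 0) := by
    have := (hl.sub_const ((n : ℝ) * π / 2)).min (tendsto_const_nhds (x := (0:ℝ)))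
    rwa [min_eq_right (by linarith)] at this
  have ht : Tendsto (fun s => Real.tan (m s) * ∑ i, (stD0 n i + s) * x i ^ 2)
      (nhdsWithin 0 (Set.Ioi 0)) (nhds 0) := by
    have h1 : Tendsto (fun s => Real.tan (m s)) (nhdsWithin 0 (Set.Ioi 0)) (nhds 0) := by
      have := (Real.continuousAt_tan.2 (by simp : Real.cos 0 ≠ 0)).tendsto.comp hm
      rw [Real.tan_zero] at this
      exact this
    have h2 : Tendsto (fun s : ℝ => ∑ i, (stD0 n i + s) * x i ^ 2) (nhdsWithin 0 (Set.Ioi 0))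
        (nhds (∑ i, (stD0 n i + 0) * x i ^ 2)) := by
      have hc : Continuous (fun s : ℝ => ∑ i, (stD0 n i + s) * x i ^ 2) := by fun_prop
      exact (hc.tendsto 0).mono_left nhdsWithin_le_nhds
    simpa using h1.mul h2
  refine le_of_tendsto ht ?_
  filter_upwards [self_mem_nhdsWithin,
    hm.eventually (lt_mem_nhds (show -(π / 2) < 0 by linarith [Real.pi_pos]))] with s hs hms
  refine st_lower _ (fun i => add_pos_of_nonneg_of_pos (st_D0_nonneg i) hs) A hA (m s) hms
    (min_le_right _ _) ?_ x
  have := min_le_left (stPhi (stCm (fun i => stD0 n i + s) A) - n * π / 2) 0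
  have hm' : m s ≤ stPhi (stCm (fun i => stD0 n i + s) A) - n * π / 2 := this
  simp only [Fintype.card_fin]
  push_cast
  linarith

theorem st_E_quad {n : ℕ} (A : Matrix (Fin (n+1)) (Fin (n+1)) ℝ) (δ : ℝ) (x : Fin (n+1) → ℝ) :
    x ⬝ᵥ ((A + Matrix.single 0 0 δ) *ᵥ x) = x ⬝ᵥ (A *ᵥ x) + δ * x 0 ^ 2 := by
  rw [Matrix.add_mulVec, dotProduct_add]
  congr 1
  rw [dotProduct, Finset.sum_eq_single 0]
  · simp [Matrix.single_mulVec]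
    ring
  · intro j _ hj
    simp [Matrix.single_mulVec, hj]
  · simp

theorem st_E_det {n : ℕ} (A : Matrix (Fin (n+1)) (Fin (n+1)) ℝ) (hA : A.IsSymm) (δ : ℝ)
    (h : A 0 0 + δ ≠ 0) : (stCm (stD0 n) (A + Matrix.single 0 0 δ)).det ≠ 0 := by
  intro hd
  have := st_sing _ (st_E_symm A hA δ) hd 0
  simp at this
  exact h this

theorem st_psd {n : ℕ} (A : Matrix (Fin (n+1)) (Fin (n+1)) ℝ) (hA : A.IsSymm)
    (hΘ : (n : ℝ) * π / 2 ≤ spaceTimeAngle A) : stPsd A := by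
  by_cases h : (stCm (stD0 n) A).det = 0
  · have h00 := st_sing A hA h 0
    intro x
    have h1 : ∀ δ : ℝ, 0 < δ → 0 ≤ x ⬝ᵥ (A *ᵥ x) + δ * x 0 ^ 2 := by
      intro δ hδ
      rw [← st_E_quad]
      refine st_psd_ne _ (st_E_symm A hA δ) (st_E_det A hA δ ?_) ?_ x
      · rw [h00, zero_add]; exact hδ.ne'
      · rw [st_sing_shift A hA h δ hδ]; exact hΘ
    have hc : Continuous (fun δ : ℝ => x ⬝ᵥ (A *ᵥ x) + δ * x 0 ^ 2) := by fun_prop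
    have := (hc.tendsto 0).mono_left (nhdsWithin_le_nhds (s := Set.Ioi 0))
    refine ge_of_tendsto (by simpa using this) ?_
    filter_upwards [self_mem_nhdsWithin] with δ hδ
    exact h1 δ hδ
  · rw [st_angle_ne A h] at hΘ
    exact st_psd_ne A hA h hΘ

theorem st_concave {n : ℕ} (X Y : Matrix (Fin (n+1)) (Fin (n+1)) ℝ)
    (hX : X.IsSymm) (hY : Y.IsSymm) (pX : stPsd X) (pY : stPsd Y) (a b : ℝ) (ha : 0 ≤ a)
    (hb : 0 ≤ b) (hab : a + b = 1) :
    a * spaceTimeAngle X + b * spaceTimeAngle Y ≤ spaceTimeAngle (a • X + b • Y) := by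
  have hZ : (a • X + b • Y).IsSymm := (hX.smul a).add (hY.smul b)
  have h00 : ∀ W : Matrix (Fin (n+1)) (Fin (n+1)) ℝ, stPsd W → 0 ≤ W 0 0 := by
    intro W hW
    have := hW (Pi.single 0 1)
    simpa using this
  have hE : ∀ W : Matrix (Fin (n+1)) (Fin (n+1)) ℝ, stPsd W → ∀ δ : ℝ, 0 < δ →
      stPsd (W + Matrix.single 0 0 δ) := by
    intro W hW δ hδ x
    rw [st_E_quad]
    have := hW x
    positivity
  have pZ : stPsd (a • X + b • Y) := by
    intro x
    rw [Matrix.add_mulVec, Matrix.smul_mulVec, Matrix.smul_mulVec, dotProduct_add,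
      dotProduct_smul, dotProduct_smul]
    exact add_nonneg (mul_nonneg ha (pX x)) (mul_nonneg hb (pY x))
  refine le_of_tendsto_of_tendsto (((st_lim_delta X hX).const_mul a).add
    ((st_lim_delta Y hY).const_mul b)) (st_lim_delta _ hZ) ?_
  filter_upwards [self_mem_nhdsWithin] with δ hδ
  have hδ' : 0 < δ := hδ
  have dX := st_E_det X hX δ (by linarith [h00 X pX])
  have dY := st_E_det Y hY δ (by linarith [h00 Y pY])
  have dZ := st_E_det _ hZ δ (by linarith [h00 _ pZ])
  refine le_of_tendsto_of_tendsto (((st_lim_s _ (st_E_symm X hX δ) dX).const_mul a).add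
    ((st_lim_s _ (st_E_symm Y hY δ) dY).const_mul b)) (st_lim_s _ (st_E_symm _ hZ δ) dZ) ?_
  filter_upwards [self_mem_nhdsWithin] with s hs
  have hconv : a • X + b • Y + Matrix.single 0 0 δ =
      a • (X + Matrix.single 0 0 δ) + b • (Y + Matrix.single 0 0 δ) := by
    have : (Matrix.single 0 0 δ : Matrix (Fin (n+1)) (Fin (n+1)) ℝ) =
      (a + b) • Matrix.single 0 0 δ := by rw [hab, one_smul]
    conv_lhs => rw [this]
    rw [add_smul, smul_add, smul_add]
    abel
  rw [hconv]
  exact st_concave_pos _ (fun i => add_pos_of_nonneg_of_pos (st_D0_nonneg i) hs) _ _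
    (st_E_symm X hX δ) (st_E_symm Y hY δ) (hE X pX δ hδ) (hE Y pY δ hδ) a b ha hb hab

/-- For every `c ∈ [nπ/2, (n+1)π/2)` the set `ℱ_c ⊂ Sym(ℝ^{n+1})` is convex. -/
theorem calF_convex (n : ℕ) (c : ℝ)
    (hc : (n : ℝ) * π / 2 ≤ c) (hc' : c < ((n : ℝ) + 1) * π / 2) :
    Convex ℝ (calF n c) := by
  intro X hX Y hY a b ha hb hab
  refine ⟨(hX.1.smul a).add (hY.1.smul b), ?_⟩
  have h := st_concave X Y hX.1 hY.1 (st_psd X hX.1 (hc.trans hX.2))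
    (st_psd Y hY.1 (hc.trans hY.2)) a b ha hb hab
  refine le_trans ?_ h
  have h1 := mul_le_mul_of_nonneg_left hX.2 ha
  have h2 := mul_le_mul_of_nonneg_left hY.2 hb
  have h3 : c = a * c + b * c := by rw [← add_mul, hab, one_mul]
  linarith
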